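/- Let W be a Weyl candidate on Minkowski space V, n a unit timelike vector, E = E(W) and B = B(W) its electric and magnetic parts, ε the spatial volume form, and l_{μν} := η_{μν} + 2 n_μ n_ν. Then the right dual of W satisfies (W*)_{μνλσ} = 2( l_{μ[λ} B_{σ]ν} − l_{ν[λ} B_{σ]μ} + n_{[λ} E_{σ]τ} ε^{τ}_{ μν} + n_{[μ} E_{ν]τ} ε^{τ}_{ λσ} ), where square brackets denote antisymmetrization with weight ½ and indices are raised with η. -/

import Mathlib

noncomputable section

/-- Minkowski space `V = ℝ⁴`. -/
abbrev V4 : Type := Fin 4 → ℝ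

/-- The Minkowski bilinear form of signature `(-,+,+,+)`. -/
def η (x y : V4) : ℝ := -(x 0 * y 0) + x 1 * y 1 + x 2 * y 2 + x 3 * y 3

/-- The standard basis of `V4`. -/
def e4 (a : Fin 4) : V4 := Pi.single a 1

/-- Components of the Minkowski metric `diag(-1,1,1,1)` (its own inverse). -/
def ηm (a b : Fin 4) : ℝ := if a = b then (if a = (0 : Fin 4) then -1 else 1) else 0

/-- A 4-linear form on `V4`, given by its components in the standard basis. -/
abbrev T4 : Type := Fin 4 → Fin 4 → Fin 4 → Fin 4 → ℝ

/-- A bilinear form on `V4`, given by its components in the standard basis. -/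
abbrev T2 : Type := Fin 4 → Fin 4 → ℝ

/-- Evaluation of a 4-linear form (given by components) on vectors. -/
def eval4 (W : T4) (x y z w : V4) : ℝ :=
  ∑ a : Fin 4, ∑ b : Fin 4, ∑ c : Fin 4, ∑ d : Fin 4, W a b c d * x a * y b * z c * w d

/-- The alternating volume 4-form with `vol(e₀,e₁,e₂,e₃) = 1`. -/
def volv (x y z w : V4) : ℝ := Matrix.det (Matrix.of ![x, y, z, w])

/-- Components `η_{αβγδ}` of the volume form. -/
def volc (a b c d : Fin 4) : ℝ := volv (e4 a) (e4 b) (e4 c) (e4 d)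

/-- Left dual `(*W)_{μνλρ} = ½ η_{μν}{}^{αβ} W_{αβλρ}`. -/
def leftDual (W : T4) : T4 := fun μ ν lam ρ =>
  (1/2) * ∑ γ : Fin 4, ∑ δ : Fin 4, ∑ a : Fin 4, ∑ b : Fin 4,
    volc μ ν γ δ * ηm γ a * ηm δ b * W a b lam ρ

/-- Right dual `(W*)_{μνλρ} = ½ W_{μν}{}^{αβ} η_{αβλρ}`. -/
def rightDual (W : T4) : T4 := fun μ ν lam ρ =>
  (1/2) * ∑ γ : Fin 4, ∑ δ : Fin 4, ∑ a : Fin 4, ∑ b : Fin 4,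
    W μ ν a b * ηm a γ * ηm b δ * volc γ δ lam ρ

/-- A Weyl candidate: pair antisymmetries, pair exchange, first Bianchi, trace-free. -/
def IsWeyl (W : T4) : Prop :=
  (∀ x y z w : V4, eval4 W x y z w = - eval4 W y x z w) ∧
  (∀ x y z w : V4, eval4 W x y z w = - eval4 W x y w z) ∧
  (∀ x y z w : V4, eval4 W x y z w = eval4 W z w x y) ∧
  (∀ x y z w : V4, eval4 W x y z w + eval4 W x z w y + eval4 W x w y z = 0) ∧
  (∀ x y : V4, ∑ a : Fin 4, ∑ b : Fin 4, ηm a b * eval4 W (e4 a) x (e4 b) y = 0)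

/-- Electric part `E(W)_{ab} = W(e_a, n, e_b, n)`. -/
def Epart (W : T4) (n : V4) : T2 := fun a b => eval4 W (e4 a) n (e4 b) n

/-- Magnetic part `B(W)_{ab} = (W*)(e_a, n, e_b, n)`. -/
def Bpart (W : T4) (n : V4) : T2 := fun a b => eval4 (rightDual W) (e4 a) n (e4 b) n

/-- Raise both indices of a bilinear form's components. -/
def up2 (S : T2) : T2 := fun a b => ∑ c : Fin 4, ∑ d : Fin 4, ηm a c * ηm b d * S c d

/-- Full contraction `S_{ab} T^{ab}`. -/
def contr2 (S T : T2) : ℝ := ∑ a : Fin 4, ∑ b : Fin 4, S a b * up2 T a b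

lemma volv_eq (x y z w : V4) : volv x y z w =
    (x 0 * y 1 - x 1 * y 0) * (z 2 * w 3 - z 3 * w 2)
    - (x 0 * y 2 - x 2 * y 0) * (z 1 * w 3 - z 3 * w 1)
    + (x 0 * y 3 - x 3 * y 0) * (z 1 * w 2 - z 2 * w 1)
    + (x 1 * y 2 - x 2 * y 1) * (z 0 * w 3 - z 3 * w 0)
    - (x 1 * y 3 - x 3 * y 1) * (z 0 * w 2 - z 2 * w 0)
    + (x 2 * y 3 - x 3 * y 2) * (z 0 * w 1 - z 1 * w 0) := by
  have h1 : (Fin.succ 2 : Fin 4) = 3 := rfl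
  have h2 : (Fin.castSucc 2 : Fin 4) = 2 := rfl
  simp [volv, Matrix.det_succ_row_zero, Fin.sum_univ_succ, Fin.succAbove, h1, h2]
  ring

lemma volv_swap_last (x y z w : V4) : volv x y z w = -volv x y w z := by
  rw [volv_eq, volv_eq]; ring

lemma e4_apply (a b : Fin 4) : e4 a b = if b = a then 1 else 0 := by
  simp [e4, Pi.single_apply]

lemma eval4_e4 (W : T4) (a b c d : Fin 4) :
    eval4 W (e4 a) (e4 b) (e4 c) (e4 d) = W a b c d := by
  simp [eval4, e4_apply]

lemma eval4_e4_left (W : T4) (n : V4) (a b : Fin 4) :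
    eval4 W (e4 a) n (e4 b) n = ∑ c, ∑ d, W a c b d * n c * n d := by
  simp [eval4, e4_apply]

lemma sum_ηm_right (f : Fin 4 → ℝ) (a : Fin 4) :
    ∑ b, ηm a b * f b = ηm a a * f a := by
  simp [ηm]

lemma IsWeyl.trace {W : T4} (hW : IsWeyl W) (b d : Fin 4) :
    -W 0 b 0 d + W 1 b 1 d + W 2 b 2 d + W 3 b 3 d = 0 := by
  have h := hW.2.2.2.2 (e4 b) (e4 d)
  simp only [eval4_e4, sum_ηm_right] at h
  simpa [Fin.sum_univ_four, ηm] using h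

lemma rightDual_eq (W : T4) (μ ν lam σ : Fin 4) : rightDual W μ ν lam σ =
    (1/2) * ∑ a, ∑ b, W μ ν a b * ηm a a * ηm b b * volc a b lam σ := by
  simp [rightDual, ηm]

/-- The right dual of a form antisymmetric in its last pair of indices, in components. -/
lemma rightDual_components {W : T4} (hW : ∀ a b c d, W a b c d = -W a b d c) (μ ν : Fin 4) :
    rightDual W μ ν 0 1 = W μ ν 2 3 ∧ rightDual W μ ν 0 2 = -W μ ν 1 3 ∧
    rightDual W μ ν 0 3 = W μ ν 1 2 ∧ rightDual W μ ν 1 2 = -W μ ν 0 3 ∧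
    rightDual W μ ν 1 3 = W μ ν 0 2 ∧ rightDual W μ ν 2 3 = -W μ ν 0 1 := by
  refine ⟨?_, ?_, ?_, ?_, ?_, ?_⟩ <;>
    simp [rightDual_eq, Fin.sum_univ_four, ηm, volc, volv_eq, e4_apply]
  · linarith [hW μ ν 2 3]
  · linarith [hW μ ν 1 3]
  · linarith [hW μ ν 1 2]
  · linarith [hW μ ν 0 3]
  · linarith [hW μ ν 0 2]
  · linarith [hW μ ν 0 1]

lemma eq_zero_of_antisymm_pairs (f : T4) (h₁ : ∀ a b c d, f a b c d = -f b a c d)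
    (h₂ : ∀ a b c d, f a b c d = -f a b d c)
    (h : ∀ a b c d, a < b → c < d → f a b c d = 0) (a b c d : Fin 4) : f a b c d = 0 := by
  have key : ∀ a b c d, a < b → f a b c d = 0 := by
    intro a b c d hab
    rcases lt_trichotomy c d with hcd | rfl | hcd
    · exact h a b c d hab hcd
    · linarith [h₂ a b c c]
    · rw [h₂, h a b d c hab hcd, neg_zero]
  rcases lt_trichotomy a b with hab | rfl | hab
  · exact key a b c d hab
  · linarith [h₁ a a c d]
  · rw [h₁, key b a c d hab, neg_zero]

set_option maxHeartbeats 4000000 in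
/-- The reconstruction identity for an arbitrary vector `n`, homogeneous of degree four in `n`. -/
lemma rightDual_homogeneous {W : T4} (hW : IsWeyl W) (n : V4) (μ ν lam σ : Fin 4) :
    η n n ^ 2 * rightDual W μ ν lam σ
      + η n n * (ηm μ lam * Bpart W n σ ν - ηm μ σ * Bpart W n lam ν
          - ηm ν lam * Bpart W n σ μ + ηm ν σ * Bpart W n lam μ)
      - 2 * (η n (e4 μ) * η n (e4 lam) * Bpart W n σ ν
          - η n (e4 μ) * η n (e4 σ) * Bpart W n lam ν
          - η n (e4 ν) * η n (e4 lam) * Bpart W n σ μ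
          + η n (e4 ν) * η n (e4 σ) * Bpart W n lam μ)
      - (∑ τ, (η n (e4 lam) * Epart W n σ τ - η n (e4 σ) * Epart W n lam τ) * ηm τ τ
          * volv n (e4 τ) (e4 μ) (e4 ν))
      - (∑ τ, (η n (e4 μ) * Epart W n ν τ - η n (e4 ν) * Epart W n μ τ) * ηm τ τ
          * volv n (e4 τ) (e4 lam) (e4 σ)) = 0 := by
  have hl : ∀ a b c d, W a b c d = -W b a c d := fun a b c d => by
    simpa only [eval4_e4] using hW.1 (e4 a) (e4 b) (e4 c) (e4 d)
  have hr : ∀ a b c d, W a b c d = -W a b d c := fun a b c d => by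
    simpa only [eval4_e4] using hW.2.1 (e4 a) (e4 b) (e4 c) (e4 d)
  have hx : ∀ a b c d, W a b c d = W c d a b := fun a b c d => by
    simpa only [eval4_e4] using hW.2.2.1 (e4 a) (e4 b) (e4 c) (e4 d)
  have hb : ∀ a b c d, W a b c d + W a c d b + W a d b c = 0 := fun a b c d => by
    simpa only [eval4_e4] using hW.2.2.2.1 (e4 a) (e4 b) (e4 c) (e4 d)
  have htr := hW.trace
  have hRl : ∀ a b c d, rightDual W a b c d = -rightDual W b a c d := fun a b c d => by
    simp only [rightDual_eq, hl a b, neg_mul, Finset.sum_neg_distrib, mul_neg]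
  have hRr : ∀ a b c d, rightDual W a b c d = -rightDual W a b d c := fun a b c d => by
    simp only [rightDual_eq, volc, volv_swap_last _ _ (e4 c), Finset.sum_neg_distrib, mul_neg]
  have hd : ∀ a c d, W a a c d = 0 := fun a c d => by linarith [hl a a c d]
  have hd' : ∀ a c d, W c d a a = 0 := fun a c d => by linarith [hr c d a a]
  have hRd' : ∀ a c d, rightDual W c d a a = 0 := fun a c d => by linarith [hRr c d a a]
  revert μ ν lam σ
  refine eq_zero_of_antisymm_pairs _ ?_ ?_ ?_
  · intro a b c d
    simp only [volv_swap_last n _ (e4 a), hRl a b, mul_neg, Finset.sum_neg_distrib, sub_mul,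
      Finset.sum_sub_distrib]
    ring
  · intro a b c d
    simp only [volv_swap_last n _ (e4 c), hRr a b c, mul_neg, Finset.sum_neg_distrib, sub_mul,
      Finset.sum_sub_distrib]
    ring
  have l10 := hl 1 0
  have l20 := hl 2 0
  have l30 := hl 3 0
  have l21 := hl 2 1
  have l31 := hl 3 1
  have l32 := hl 3 2
  have r10 := fun a b => hr a b 1 0
  have r20 := fun a b => hr a b 2 0
  have r30 := fun a b => hr a b 3 0
  have r21 := fun a b => hr a b 2 1
  have r31 := fun a b => hr a b 3 1
  have r32 := fun a b => hr a b 3 2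
  have R10 := fun a b => hRr a b 1 0
  have R20 := fun a b => hRr a b 2 0
  have R30 := fun a b => hRr a b 3 0
  have R21 := fun a b => hRr a b 2 1
  have R31 := fun a b => hRr a b 3 1
  have R32 := fun a b => hRr a b 3 2
  have x0201 := hx 0 2 0 1
  have x0301 := hx 0 3 0 1
  have x0302 := hx 0 3 0 2
  have x1201 := hx 1 2 0 1
  have x1202 := hx 1 2 0 2
  have x1203 := hx 1 2 0 3
  have x1301 := hx 1 3 0 1
  have x1302 := hx 1 3 0 2
  have x1303 := hx 1 3 0 3
  have x2301 := hx 2 3 0 1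
  have x2302 := hx 2 3 0 2
  have x2303 := hx 2 3 0 3
  have x1312 := hx 1 3 1 2
  have x2312 := hx 2 3 1 2
  have x2313 := hx 2 3 1 3
  have t00 := htr 0 0
  have t01 := htr 0 1
  have t02 := htr 0 2
  have t03 := htr 0 3
  have t11 := htr 1 1
  have t12 := htr 1 2
  have t13 := htr 1 3
  have t22 := htr 2 2
  have t23 := htr 2 3
  have t33 := htr 3 3
  have b0123 := hb 0 1 2 3
  simp only [l10, l20, l30, l21, l31, l32, r10, r20, r30, r21, r31, r32, hd, hd']
    at t00 t01 t02 t03 t11 t12 t13 t22 t23 t33 b0123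
  have c0303 : W 0 3 0 3 = -W 0 1 0 1 - W 0 2 0 2 := by linarith
  have c0312 : W 0 3 1 2 = W 0 2 1 3 - W 0 1 2 3 := by linarith
  have c0223 : W 0 2 2 3 = -W 0 1 1 3 := by linarith
  have c0323 : W 0 3 2 3 = W 0 1 1 2 := by linarith
  have c0313 : W 0 3 1 3 = -W 0 2 1 2 := by linarith
  have c1212 : W 1 2 1 2 = W 0 1 0 1 + W 0 2 0 2 := by linarith
  have c1313 : W 1 3 1 3 = -W 0 2 0 2 := by linarith
  have c2323 : W 2 3 2 3 = -W 0 1 0 1 := by linarith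
  have c1323 : W 1 3 2 3 = W 0 1 0 2 := by linarith
  have c1223 : W 1 2 2 3 = -W 0 1 0 3 := by linarith
  have c1213 : W 1 2 1 3 = W 0 2 0 3 := by linarith
  have dual := rightDual_components hr
  have d01 := fun a b => (dual a b).1
  have d02 := fun a b => (dual a b).2.1
  have d03 := fun a b => (dual a b).2.2.1
  have d12 := fun a b => (dual a b).2.2.2.1
  have d13 := fun a b => (dual a b).2.2.2.2.1
  have d23 := fun a b => (dual a b).2.2.2.2.2
  intro μ ν lam σ hμν hlσ
  fin_cases μ <;> fin_cases ν <;> first | exact absurd hμν (by decide) | skip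
  all_goals fin_cases lam <;> fin_cases σ <;> first | exact absurd hlσ (by decide) | skip
  all_goals
    simp [Bpart, Epart, eval4_e4_left, Fin.sum_univ_four, volv_eq, η, e4_apply, ηm,
      -neg_add_rev]
    simp only [R10, R20, R30, R21, R31, R32, hRd', d01, d02, d03, d12, d13, d23,
      l10, l20, l30, l21, l31, l32, r10, r20, r30, r21, r31, r32, hd, hd', x0201, x0301,
      x0302, x1201, x1202, x1203, x1301, x1302, x1303, x2301, x2302, x2303, x1312, x2312, x2313,
      c0303, c0312, c0223, c0323, c0313, c1212, c1313, c2323, c1323, c1223, c1213]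
    ring

/-- the right dual of a Weyl candidate is reconstructed from the electric and
magnetic parts of `W`. -/
theorem stmt_11 (W : T4) (hW : IsWeyl W) (n : V4) (hn : η n n = -1)
    (E B : T2) (hE : E = Epart W n) (hB : B = Bpart W n)
    (nl : Fin 4 → ℝ) (hnl : ∀ μ, nl μ = η n (e4 μ))
    (l : T2) (hl : l = fun μ ν => ηm μ ν + 2 * nl μ * nl ν)
    (εc : Fin 4 → Fin 4 → Fin 4 → ℝ)
    (hεc : ∀ a b c, εc a b c = volv n (e4 a) (e4 b) (e4 c)) :
    ∀ μ ν lam σ, rightDual W μ ν lam σ =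
      2 * ((1/2) * (l μ lam * B σ ν - l μ σ * B lam ν)
        - (1/2) * (l ν lam * B σ μ - l ν σ * B lam μ)
        + (1/2) * (∑ τ : Fin 4, ∑ τ' : Fin 4,
            (nl lam * E σ τ - nl σ * E lam τ) * ηm τ τ' * εc τ' μ ν)
        + (1/2) * (∑ τ : Fin 4, ∑ τ' : Fin 4,
            (nl μ * E ν τ - nl ν * E μ τ) * ηm τ τ' * εc τ' lam σ)) := by
  intro μ ν lam σ
  have key := rightDual_homogeneous hW n μ ν lam σ
  have contract : ∀ f g : Fin 4 → ℝ,
      ∑ τ, ∑ τ', f τ * ηm τ τ' * g τ' = ∑ τ, f τ * ηm τ τ * g τ := fun f g => by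
    simp [ηm]
  subst hE hB hl
  simp only [hnl, hεc]
  rw [contract, contract]
  linear_combination key +
    ((1 - η n n) * rightDual W μ ν lam σ
      - (ηm μ lam * Bpart W n σ ν - ηm μ σ * Bpart W n lam ν
          - ηm ν lam * Bpart W n σ μ + ηm ν σ * Bpart W n lam μ)) * hn
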